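/- Let z* ∈ F be a feasible point of the MPSC at which MPSC directional quasi-normality holds. Then the MPSC local error bound holds in a neighborhood of z*: there exist a neighborhood V of z* and α > 0 such that dist(z, F) ≤ α(Σ_{i=1}^p max{g_i(z),0} + Σ_{j=1}^q |h_j(z)| + Σ_{i=1}^m min{|G_i(z)|, |H_i(z)|}) for all z ∈ V. -/

import Mathlib

open scoped Classical InnerProductSpace
open Filter Topology

noncomputable section

/-- Euclidean space `ℝⁿ`. -/
abbrev Euc (n : ℕ) : Type := EuclideanSpace ℝ (Fin n)

/-- Data of a mathematical program with switching constraints (MPSC):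
`min f(z)` s.t. `g(z) ≤ 0`, `h(z) = 0`, `Gᵢ(z)Hᵢ(z) = 0 (i = 1,…,m)`,
with all defining functions continuously differentiable (gradients `f'`, `g'`, … are
genuine gradient maps, and they are continuous). -/
structure MPSC (n p q m : ℕ) where
  f : Euc n → ℝ
  g : Fin p → Euc n → ℝ
  h : Fin q → Euc n → ℝ
  G : Fin m → Euc n → ℝ
  H : Fin m → Euc n → ℝ
  f' : Euc n → Euc n
  g' : Fin p → Euc n → Euc n
  h' : Fin q → Euc n → Euc n
  G' : Fin m → Euc n → Euc n
  H' : Fin m → Euc n → Euc n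
  grad_f : ∀ z, HasGradientAt f (f' z) z
  grad_g : ∀ i z, HasGradientAt (g i) (g' i z) z
  grad_h : ∀ j z, HasGradientAt (h j) (h' j z) z
  grad_G : ∀ i z, HasGradientAt (G i) (G' i z) z
  grad_H : ∀ i z, HasGradientAt (H i) (H' i z) z
  cont_f' : Continuous f'
  cont_g' : ∀ i, Continuous (g' i)
  cont_h' : ∀ j, Continuous (h' j)
  cont_G' : ∀ i, Continuous (G' i)
  cont_H' : ∀ i, Continuous (H' i)

namespace MPSC

variable {n p q m : ℕ} (P : MPSC n p q m)

/-- The feasible region `F` of the MPSC. -/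
def Feas : Set (Euc n) :=
  {z | (∀ i, P.g i z ≤ 0) ∧ (∀ j, P.h j z = 0) ∧ ∀ i, P.G i z * P.H i z = 0}

/-- Active inequality constraints `I_g*`. -/
def Ig (zs : Euc n) : Set (Fin p) := {i | P.g i zs = 0}

/-- `I_G* = {i : Gᵢ(z*) = 0, Hᵢ(z*) ≠ 0}`. -/
def IGs (zs : Euc n) : Set (Fin m) := {i | P.G i zs = 0 ∧ P.H i zs ≠ 0}

/-- `I_H* = {i : Gᵢ(z*) ≠ 0, Hᵢ(z*) = 0}`. -/
def IHs (zs : Euc n) : Set (Fin m) := {i | P.G i zs ≠ 0 ∧ P.H i zs = 0}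

/-- `I_GH* = {i : Gᵢ(z*) = Hᵢ(z*) = 0}`. -/
def IGH (zs : Euc n) : Set (Fin m) := {i | P.G i zs = 0 ∧ P.H i zs = 0}

/-- `I_g*(d)`. -/
def Igd (zs d : Euc n) : Set (Fin p) := {i | P.g i zs = 0 ∧ ⟪P.g' i zs, d⟫_ℝ = 0}

/-- `I_G*(d)`. -/
def IGd (zs d : Euc n) : Set (Fin m) :=
  {i | i ∈ P.IGH zs ∧ ⟪P.G' i zs, d⟫_ℝ = 0 ∧ ⟪P.H' i zs, d⟫_ℝ ≠ 0}

/-- `I_H*(d)`. -/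
def IHd (zs d : Euc n) : Set (Fin m) :=
  {i | i ∈ P.IGH zs ∧ ⟪P.G' i zs, d⟫_ℝ ≠ 0 ∧ ⟪P.H' i zs, d⟫_ℝ = 0}

/-- `I_GH*(d)`. -/
def IGHd (zs d : Euc n) : Set (Fin m) :=
  {i | i ∈ P.IGH zs ∧ ⟪P.G' i zs, d⟫_ℝ = 0 ∧ ⟪P.H' i zs, d⟫_ℝ = 0}

/-- The linearization cone `L(z*)` of the MPSC at `z*`. -/
def LinCone (zs : Euc n) : Set (Euc n) :=
  {d | (∀ i ∈ P.Ig zs, ⟪P.g' i zs, d⟫_ℝ ≤ 0) ∧ (∀ j, ⟪P.h' j zs, d⟫_ℝ = 0) ∧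
       (∀ i ∈ P.IGs zs, ⟪P.G' i zs, d⟫_ℝ = 0) ∧ (∀ i ∈ P.IHs zs, ⟪P.H' i zs, d⟫_ℝ = 0) ∧
       (∀ i ∈ P.IGH zs, ⟪P.G' i zs, d⟫_ℝ * ⟪P.H' i zs, d⟫_ℝ = 0)}

/-- The critical cone `C(z*)`. -/
def Crit (zs : Euc n) : Set (Euc n) := {d ∈ P.LinCone zs | ⟪P.f' zs, d⟫_ℝ ≤ 0}

/-- `(λ^g, λ^h, λ^G, λ^H)` is an M-multiplier in direction `d` at `z*`. -/
def IsMMultDir (zs d : Euc n) (lg : Fin p → ℝ) (lh : Fin q → ℝ) (lG lH : Fin m → ℝ) : Prop :=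
  ((0 : Euc n) = P.f' zs
      + (∑ i ∈ Finset.univ.filter (fun i => i ∈ P.Igd zs d), lg i • P.g' i zs)
      + (∑ j, lh j • P.h' j zs) + (∑ i, (lG i • P.G' i zs + lH i • P.H' i zs))) ∧
  (∀ i ∈ P.Igd zs d, 0 ≤ lg i) ∧ (∀ i ∉ P.Igd zs d, lg i = 0) ∧
  (∀ i, i ∈ P.IHs zs ∪ P.IHd zs d → lG i = 0) ∧
  (∀ i, i ∈ P.IGs zs ∪ P.IGd zs d → lH i = 0) ∧
  ∀ i ∈ P.IGHd zs d, lG i * lH i = 0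

/-- `z*` is M-stationary in direction `d`. -/
def MStatDir (zs d : Euc n) : Prop :=
  ∃ (lg : Fin p → ℝ) (lh : Fin q → ℝ) (lG lH : Fin m → ℝ), P.IsMMultDir zs d lg lh lG lH

/-- `z*` is S-stationary in direction `d`. -/
def SStatDir (zs d : Euc n) : Prop :=
  ∃ (lg : Fin p → ℝ) (lh : Fin q → ℝ) (lG lH : Fin m → ℝ),
    P.IsMMultDir zs d lg lh lG lH ∧ ∀ i ∈ P.IGHd zs d, lG i = 0 ∧ lH i = 0

/-- MPSC-LICQ in direction `d` at `z*`. -/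
def LICQd (zs d : Euc n) : Prop :=
  LinearIndependent ℝ
    (Sum.elim (fun i : {i // i ∈ P.Igd zs d} => P.g' i.1 zs)
      (Sum.elim (fun j : Fin q => P.h' j zs)
        (Sum.elim (fun i : {i // i ∈ P.IGs zs ∪ P.IGd zs d ∪ P.IGHd zs d} => P.G' i.1 zs)
          (fun i : {i // i ∈ P.IHs zs ∪ P.IHd zs d ∪ P.IGHd zs d} => P.H' i.1 zs))))

/-- MPSC-LICQ at `z*`. -/
def LICQ (zs : Euc n) : Prop :=
  LinearIndependent ℝ
    (Sum.elim (fun i : {i // i ∈ P.Ig zs} => P.g' i.1 zs)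
      (Sum.elim (fun j : Fin q => P.h' j zs)
        (Sum.elim (fun i : {i // i ∈ P.IGs zs ∪ P.IGH zs} => P.G' i.1 zs)
          (fun i : {i // i ∈ P.IHs zs ∪ P.IGH zs} => P.H' i.1 zs))))

/-- MPSC quasi-normality at `z*` in direction `d`. -/
def QuasiNormalDir (zs d : Euc n) : Prop :=
  ∀ (lg : Fin p → ℝ) (lh : Fin q → ℝ) (lG lH : Fin m → ℝ),
    ((0 : Euc n) = (∑ i, lg i • P.g' i zs) + (∑ j, lh j • P.h' j zs)
        + (∑ i, (lG i • P.G' i zs + lH i • P.H' i zs))) →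
    ((∀ i ∈ P.Igd zs d, 0 ≤ lg i) ∧ (∀ i ∉ P.Igd zs d, lg i = 0) ∧
      (∀ i, i ∈ P.IGs zs ∪ P.IGd zs d → lH i = 0) ∧
      (∀ i, i ∈ P.IHs zs ∪ P.IHd zs d → lG i = 0) ∧
      ∀ i ∈ P.IGHd zs d, lG i * lH i = 0) →
    (∃ (dk : ℕ → Euc n) (t : ℕ → ℝ),
      Tendsto dk atTop (𝓝 d) ∧ (∀ k, 0 < t k) ∧ Tendsto t atTop (𝓝 0) ∧
      ∀ k, (∀ i, lg i ≠ 0 → 0 < lg i * P.g i (zs + t k • dk k)) ∧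
        (∀ j, lh j ≠ 0 → 0 < lh j * P.h j (zs + t k • dk k)) ∧
        (∀ i, lG i ≠ 0 → 0 < lG i * P.G i (zs + t k • dk k)) ∧
        (∀ i, lH i ≠ 0 → 0 < lH i * P.H i (zs + t k • dk k))) →
    lg = 0 ∧ lh = 0 ∧ lG = 0 ∧ lH = 0

/-- MPSC directional quasi-normality at `z*`: quasi-normality in every direction of
the linearization cone. -/
def DirQuasiNormal (zs : Euc n) : Prop := ∀ d ∈ P.LinCone zs, P.QuasiNormalDir zs d

/-- `(λ^g, λ^h, λ^G, λ^H)` is an S-multiplier at `z*` (S-stationarity conditions). -/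
def IsSMult (zs : Euc n) (lg : Fin p → ℝ) (lh : Fin q → ℝ) (lG lH : Fin m → ℝ) : Prop :=
  ((0 : Euc n) = P.f' zs
      + (∑ i ∈ Finset.univ.filter (fun i => i ∈ P.Ig zs), lg i • P.g' i zs)
      + (∑ j, lh j • P.h' j zs) + (∑ i, (lG i • P.G' i zs + lH i • P.H' i zs))) ∧
  (∀ i ∈ P.Ig zs, 0 ≤ lg i) ∧ (∀ i ∈ P.IHs zs, lG i = 0) ∧ (∀ i ∈ P.IGs zs, lH i = 0) ∧
  ∀ i ∈ P.IGH zs, lG i = 0 ∧ lH i = 0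

/-- `(λ^g, λ^h, λ^G, λ^H)` is an M-multiplier at `z*` (M-stationarity conditions). -/
def IsMMult (zs : Euc n) (lg : Fin p → ℝ) (lh : Fin q → ℝ) (lG lH : Fin m → ℝ) : Prop :=
  ((0 : Euc n) = P.f' zs
      + (∑ i ∈ Finset.univ.filter (fun i => i ∈ P.Ig zs), lg i • P.g' i zs)
      + (∑ j, lh j • P.h' j zs) + (∑ i, (lG i • P.G' i zs + lH i • P.H' i zs))) ∧
  (∀ i ∈ P.Ig zs, 0 ≤ lg i) ∧ (∀ i ∈ P.IHs zs, lG i = 0) ∧ (∀ i ∈ P.IGs zs, lH i = 0) ∧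
  ∀ i ∈ P.IGH zs, lG i * lH i = 0

/-- The rank `r(z*; d)` of the relevant family of gradients. -/
def rankd (zs d : Euc n) : ℕ :=
  Set.finrank ℝ
    ((fun i => P.g' i zs) '' P.Igd zs d ∪ Set.range (fun j => P.h' j zs) ∪
      (fun i => P.G' i zs) '' (P.IGs zs ∪ P.IGd zs d ∪ P.IGHd zs d) ∪
      (fun i => P.H' i zs) '' (P.IHs zs ∪ P.IHd zs d ∪ P.IGHd zs d))

/-- `(J_g, J_G, J_H)` is an MPSC working set in direction `d`. -/
def IsWorkingSet (zs d : Euc n) (Jg : Finset (Fin p)) (JG JH : Finset (Fin m)) : Prop :=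
  (∀ i ∈ Jg, i ∈ P.Igd zs d) ∧
  (∀ i ∈ JG, i ∈ P.IGs zs ∪ P.IGd zs d ∪ P.IGHd zs d) ∧
  (∀ i ∈ JH, i ∈ P.IHs zs ∪ P.IHd zs d ∪ P.IGHd zs d) ∧
  JG ∪ JH = Finset.univ ∧
  Jg.card + q + JG.card + JH.card = P.rankd zs d ∧
  LinearIndependent ℝ
    (Sum.elim (fun i : {i // i ∈ Jg} => P.g' i.1 zs)
      (Sum.elim (fun j : Fin q => P.h' j zs)
        (Sum.elim (fun i : {i // i ∈ JG} => P.G' i.1 zs)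
          (fun i : {i // i ∈ JH} => P.H' i.1 zs))))

/-- `z*` is strongly M-stationary in direction `d`. -/
def StronglyMStatDir (zs d : Euc n) : Prop :=
  ∃ (Jg : Finset (Fin p)) (JG JH : Finset (Fin m)) (lg : Fin p → ℝ) (lh : Fin q → ℝ)
    (lG lH : Fin m → ℝ),
    P.IsWorkingSet zs d Jg JG JH ∧ P.IsMMultDir zs d lg lh lG lH ∧
    (∀ i ∉ Jg, lg i = 0) ∧ (∀ i ∉ JG, lG i = 0) ∧ (∀ i ∉ JH, lH i = 0) ∧
    ∀ i ∈ JG ∩ JH, lG i = 0 ∧ lH i = 0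

/-- The MPSC constraint-violation residual. -/
def residual (z : Euc n) : ℝ :=
  (∑ i, max (P.g i z) 0) + (∑ j, |P.h j z|) + ∑ i, min |P.G i z| |P.H i z|

/-- The MPSC local error bound property around `z*`. -/
def ErrorBound (zs : Euc n) : Prop :=
  ∃ V ∈ 𝓝 zs, ∃ α > (0 : ℝ), ∀ z ∈ V, Metric.infDist z P.Feas ≤ α * P.residual z

/-- Equality-constraint gradients (at `z`) of the branch problem `NLP(β₁, β₂)`. -/
def EqGrads (zs : Euc n) (b1 b2 : Set (Fin m)) (z : Euc n) : Set (Euc n) :=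
  Set.range (fun j => P.h' j z) ∪ (fun i => P.G' i z) '' (P.IGs zs ∪ b1) ∪
    (fun i => P.H' i z) '' (P.IHs zs ∪ b2)

/-- The index set `I⁻` of the branch problem `NLP(β₁, β₂)` at `z*`. -/
def Iminus (zs : Euc n) (b1 b2 : Set (Fin m)) : Set (Fin p) :=
  {l | l ∈ P.Ig zs ∧
    ∃ (lh : Fin q → ℝ) (lG lH : Fin m → ℝ) (mu : Fin p → ℝ),
      (∀ i, i ∉ P.IGs zs ∪ b1 → lG i = 0) ∧ (∀ i, i ∉ P.IHs zs ∪ b2 → lH i = 0) ∧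
      (∀ i, 0 ≤ mu i) ∧ (∀ i, ¬(i ∈ P.Ig zs ∧ i ≠ l) → mu i = 0) ∧
      -(P.g' l zs) = (∑ j, lh j • P.h' j zs)
        + (∑ i, (lG i • P.G' i zs + lH i • P.H' i zs)) + (∑ i, mu i • P.g' i zs)}

/-- CRSC holds at `z*` for the branch problem `NLP(β₁, β₂)`. -/
def CRSCpiece (zs : Euc n) (b1 b2 : Set (Fin m)) : Prop :=
  ∃ U ∈ 𝓝 zs, ∀ z ∈ U,
    Set.finrank ℝ ((fun i => P.g' i z) '' P.Iminus zs b1 b2 ∪ P.EqGrads zs b1 b2 z) =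
      Set.finrank ℝ ((fun i => P.g' i zs) '' P.Iminus zs b1 b2 ∪ P.EqGrads zs b1 b2 zs)

/-- MPSC piecewise CRSC: CRSC holds for every branch problem `NLP(β₁, β₂)`. -/
def PiecewiseCRSC (zs : Euc n) : Prop :=
  ∀ b1 b2 : Set (Fin m), b1 ∪ b2 = P.IGH zs → b1 ∩ b2 = ∅ → P.CRSCpiece zs b1 b2

/-- The set-valued map `K` (index sets frozen at `z*`, gradients at `z`). -/
def Kmap (zs z : Euc n) : Set (Euc n) :=
  {y | ∃ (lg : Fin p → ℝ) (lh : Fin q → ℝ) (lG lH : Fin m → ℝ),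
      (∀ i, 0 ≤ lg i) ∧ (∀ i, i ∉ P.Ig zs → lg i = 0) ∧
      (∀ i ∈ P.IGs zs, lH i = 0) ∧ (∀ i ∈ P.IHs zs, lG i = 0) ∧
      (∀ i ∈ P.IGH zs, lG i * lH i = 0) ∧
      y = (∑ i, lg i • P.g' i z) + (∑ j, lh j • P.h' j z)
          + (∑ i, (lG i • P.G' i z + lH i • P.H' i z))}

/-- `z*` is AM-regular. -/
def AMRegular (zs : Euc n) : Prop :=
  ∀ y : Euc n,
    (∃ zk yk : ℕ → Euc n, Tendsto zk atTop (𝓝 zs) ∧ Tendsto yk atTop (𝓝 y) ∧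
      ∀ k, yk k ∈ P.Kmap zs (zk k)) → y ∈ P.Kmap zs zs

/-- The regular (Fréchet) normal cone to `A` at `x`. -/
def frechetNormalCone (A : Set (Euc n)) (x : Euc n) : Set (Euc n) :=
  {ζ | ∀ ε > (0 : ℝ), ∃ δ > (0 : ℝ), ∀ y ∈ A, ‖y - x‖ < δ → ⟪ζ, y - x⟫_ℝ ≤ ε * ‖y - x‖}

/-- The generalized Guignard constraint qualification at `z*`. -/
def GGCQ (zs : Euc n) : Prop :=
  frechetNormalCone P.Feas zs = {ζ | ∀ d ∈ P.LinCone zs, ⟪ζ, d⟫_ℝ ≤ 0}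

/-- Membership in the multiplier set `R_SC`. -/
def InRSC (zs : Euc n) (lg : Fin p → ℝ) (lh : Fin q → ℝ) (lG lH : Fin m → ℝ) : Prop :=
  (∀ i, i ∉ P.Ig zs → lg i = 0) ∧ (∀ i ∈ P.IHs zs, lG i = 0) ∧ ∀ i ∈ P.IGs zs, lH i = 0

/-- Membership in the multiplier set `N_SC`. -/
def InNSC (zs : Euc n) (mg : Fin p → ℝ) (mh : Fin q → ℝ) (mG mH : Fin m → ℝ) : Prop :=
  P.InRSC zs mg mh mG mH ∧
  (0 : Euc n) = (∑ i, mg i • P.g' i zs) + (∑ j, mh j • P.h' j zs)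
      + (∑ i, (mG i • P.G' i zs + mH i • P.H' i zs))

/-- `z*` is Q-stationary with respect to the bipartition `(β₁, β₂)` of `I_GH*`. -/
def QStat (zs : Euc n) (b1 b2 : Set (Fin m)) : Prop :=
  ∃ (lg mg : Fin p → ℝ) (lh mh : Fin q → ℝ) (lG lH mG mH : Fin m → ℝ),
    P.InRSC zs lg lh lG lH ∧
    ((0 : Euc n) = P.f' zs + (∑ i, lg i • P.g' i zs) + (∑ j, lh j • P.h' j zs)
        + (∑ i, (lG i • P.G' i zs + lH i • P.H' i zs))) ∧
    P.InNSC zs mg mh mG mH ∧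
    (∀ i ∈ P.Ig zs, max (mg i) 0 ≤ lg i) ∧
    (∀ i ∈ b1, lH i = 0 ∧ lG i = mG i) ∧
    ∀ i ∈ b2, lG i = 0 ∧ lH i = mH i

end MPSC

/-! If the error bound fails at a solution `x` of a system of smooth inequalities and equalities,
Ekeland's variational principle provides infeasible points `y n → x` at which the norm of the
violation vector has slope tending to `0` and is of order `o(‖y n - x‖)`. Along a subsequence the
normalized steps `y n - x` and the normalized violation vectors converge, to a direction in the
linearization cone and to a unit multiplier that contradict quasi-normality in that direction.

A switching system is the union of the finitely many branches that choose one factor of each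
product, and at each point its residual equals that of one of the branches. A branch through `zs`
inherits directional quasi-normality; a branch that misses `zs` has a residual bounded away from
`0` near `zs`, whereas the distance to the feasible region tends to `0`. -/

/-- The distance to `S` is bounded near `x` by a multiple of the residual `ρ`. -/
def HasLocalErrorBound {X : Type*} [PseudoMetricSpace X] (S : Set X) (ρ : X → ℝ) (x : X) : Prop :=
  ∃ α > 0, ∀ᶠ z in 𝓝 x, Metric.infDist z S ≤ α * ρ z

namespace HasLocalErrorBound

variable {X : Type*} [PseudoMetricSpace X] {S T : Set X} {ρ σ : X → ℝ} {x : X}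

theorem mono_set (h : HasLocalErrorBound S ρ x) (hS : S.Nonempty) (hST : S ⊆ T) :
    HasLocalErrorBound T ρ x := by
  obtain ⟨α, hα, hbound⟩ := h
  exact ⟨α, hα, hbound.mono fun z hz => (Metric.infDist_le_infDist_of_subset hST hS).trans hz⟩

theorem mono_residual (h : HasLocalErrorBound S ρ x) (hρσ : ∀ᶠ z in 𝓝 x, ρ z ≤ σ z) :
    HasLocalErrorBound S σ x := by
  obtain ⟨α, hα, hbound⟩ := h
  refine ⟨α, hα, ?_⟩
  filter_upwards [hbound, hρσ] with z hz hle
  exact hz.trans (by gcongr)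

theorem of_residual_pos (hx : x ∈ S) (hρ : ContinuousAt ρ x) (hpos : 0 < ρ x) :
    HasLocalErrorBound S ρ x := by
  refine ⟨1, one_pos, ?_⟩
  have hdist : ContinuousAt (fun z => Metric.infDist z S) x :=
    (Metric.continuous_infDist_pt S).continuousAt
  have hlt : Metric.infDist x S < ρ x := by rwa [Metric.infDist_zero_of_mem hx]
  simpa only [one_mul] using (hdist.eventually_lt hρ hlt).mono fun z hz => hz.le

theorem of_finite {ι : Type*} [Finite ι] {ρ : ι → X → ℝ}
    (h : ∀ i, HasLocalErrorBound S (ρ i) x) (hσ : ∀ᶠ z in 𝓝 x, ∃ i, ρ i z ≤ σ z) :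
    HasLocalErrorBound S σ x := by
  choose α hα hbound using h
  obtain ⟨M, hM⟩ := Finite.exists_le α
  refine ⟨max M 1, by positivity, ?_⟩
  filter_upwards [eventually_all.2 hbound, hσ] with z hz ⟨i, hi⟩
  have hρi : 0 ≤ ρ i z := nonneg_of_mul_nonneg_right (Metric.infDist_nonneg.trans (hz i)) (hα i)
  calc Metric.infDist z S ≤ α i * ρ i z := hz i
    _ ≤ max M 1 * σ z := by gcongr; exact (hM i).trans (le_max_left M 1)

end HasLocalErrorBound

-- Ekeland's variational principle, where compactness replaces completeness: `y` is a minimizer of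
-- `ρ + ε dist(·, z)` on the closed ball.
theorem exists_isLocalMin_add_mul_dist {X : Type*} [PseudoMetricSpace X] [ProperSpace X]
    {ρ : X → ℝ} {z : X} {ε r : ℝ} (hρ : LowerSemicontinuousOn ρ (Metric.closedBall z r))
    (hρ_nonneg : ∀ w, 0 ≤ ρ w) (hε : 0 < ε) (hz : ρ z < ε * r) :
    ∃ y, ρ y + ε * dist y z ≤ ρ z ∧ IsLocalMin (fun w => ρ w + ε * dist w y) y := by
  have hr : 0 ≤ r := (pos_of_mul_pos_right ((hρ_nonneg z).trans_lt hz) hε.le).le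
  have hpenalty : Continuous fun w => ε * dist w z := by fun_prop
  obtain ⟨y, -, hy⟩ := LowerSemicontinuousOn.exists_isMinOn
    (f := fun w => ρ w + ε * dist w z) ⟨z, Metric.mem_closedBall_self hr⟩
    (isCompact_closedBall z r) (hρ.add (hpenalty.lowerSemicontinuous.lowerSemicontinuousOn _))
  have hyz : ρ y + ε * dist y z ≤ ρ z := by simpa using hy (Metric.mem_closedBall_self hr)
  have hyr : dist y z < r := by
    refine lt_of_mul_lt_mul_left ?_ hε.le
    linarith [hρ_nonneg y]
  refine ⟨y, hyz, ?_⟩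
  filter_upwards [Metric.closedBall_mem_nhds_of_mem hyr] with w hw
  have hyw : ρ y + ε * dist y z ≤ ρ w + ε * dist w z := hy hw
  have htri : ε * dist w z ≤ ε * (dist w y + dist y z) := by
    gcongr
    exact dist_triangle w y z
  rw [dist_self]
  linarith

theorem frequently_isLocalMin_of_not_hasLocalErrorBound {X : Type*} [PseudoMetricSpace X]
    [ProperSpace X] {S : Set X} {ρ : X → ℝ} {x : X} {ε : ℝ} (hx : x ∈ S)
    (hρ : ∀ᶠ z in 𝓝 x, LowerSemicontinuousAt ρ z) (hρ_nonneg : ∀ z, 0 ≤ ρ z)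
    (hnot : ¬ HasLocalErrorBound S ρ x) (hε : 0 < ε) :
    ∃ᶠ y in 𝓝 x, y ∉ S ∧ ρ y ≤ ε * dist y x ∧ IsLocalMin (fun z => ρ z + ε * dist z y) y := by
  rw [Metric.nhds_basis_ball.frequently_iff]
  intro δ hδ
  obtain ⟨r, hr, hlsc⟩ := Metric.eventually_nhds_iff_ball.1 hρ
  have hfail : ∃ᶠ z in 𝓝 x, 2 / ε * ρ z < Metric.infDist z S := by
    simp only [HasLocalErrorBound, not_exists, not_and, not_eventually, not_le] at hnot
    exact hnot (2 / ε) (by positivity)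
  obtain ⟨z, hz, hzx⟩ := (hfail.and_eventually
    (Metric.ball_mem_nhds x (half_pos (lt_min hδ hr)))).exists
  rw [lt_div_iff₀' two_pos, lt_min_iff] at hzx
  set D := Metric.infDist z S
  have hDz : D ≤ dist z x := Metric.infDist_le_dist_of_mem hx
  have hD : 0 ≤ D := Metric.infDist_nonneg
  have hρz : ρ z < ε * (D / 2) := by
    rw [div_mul_eq_mul_div, div_lt_iff₀' hε] at hz
    linarith
  have hlsc_ball : LowerSemicontinuousOn ρ (Metric.closedBall z (D / 2)) := by
    refine fun w hw => (hlsc w ?_).lowerSemicontinuousWithinAt _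
    rw [Metric.mem_closedBall] at hw
    rw [Metric.mem_ball]
    linarith [dist_triangle w z x]
  obtain ⟨y, hyz, hmin⟩ := exists_isLocalMin_add_mul_dist hlsc_ball hρ_nonneg hε hρz
  have hyz_lt : dist y z < D / 2 := by
    refine lt_of_mul_lt_mul_left ?_ hε.le
    linarith [hρ_nonneg y]
  have hyx : ε * (D / 2) ≤ ε * dist y x := by
    gcongr
    linarith [dist_triangle_left z x y]
  refine ⟨y, ?_, fun hyS => ?_, ?_, hmin⟩
  · rw [Metric.mem_ball]
    linarith [dist_triangle y z x]
  · linarith [Metric.infDist_le_dist_of_mem (x := z) hyS, dist_comm y z]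
  · have hpos : 0 ≤ ε * dist y z := by positivity
    linarith

theorem norm_le_of_hasFDerivAt_of_isLocalMin_add_mul_dist {E : Type*} [NormedAddCommGroup E]
    [NormedSpace ℝ E] {f : E → ℝ} {f' : E →L[ℝ] ℝ} {y : E} {ε : ℝ} (hε : 0 ≤ ε)
    (hf : HasFDerivAt f f' y) (hmin : IsLocalMin (fun z => f z + ε * dist z y) y) :
    ‖f'‖ ≤ ε := by
  have hlower : ∀ v, -(ε * ‖v‖) ≤ f' v := by
    intro v
    have hray : Tendsto (fun c : ℝ => y + c⁻¹ • v) atTop (𝓝 y) := by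
      simpa using ((tendsto_inv_atTop_zero (𝕜 := ℝ)).smul_const v).const_add y
    refine ge_of_tendsto (hf.lim_real v) ?_
    filter_upwards [hray.eventually hmin, eventually_gt_atTop 0] with c hc hc0
    simp only [dist_self, mul_zero, add_zero, dist_self_add_left, norm_smul, norm_inv,
      Real.norm_of_nonneg hc0.le] at hc
    calc -(ε * ‖v‖) = c * -(ε * (c⁻¹ * ‖v‖)) := by field_simp
      _ ≤ c • (f (y + c⁻¹ • v) - f y) := by
        rw [smul_eq_mul]
        gcongr
        linarith
  refine f'.opNorm_le_bound hε fun v => abs_le.2 ⟨hlower v, ?_⟩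
  have hneg := hlower (-v)
  rw [map_neg, norm_neg] at hneg
  linarith

theorem hasDerivAt_max_zero_sq (a : ℝ) :
    HasDerivAt (fun t : ℝ => max t 0 ^ 2) (2 * max a 0) a := by
  have hquad : ∀ t, ‖max t 0 ^ 2 - max a 0 ^ 2 - (t - a) • (2 * max a 0)‖ ≤ 1 * ‖‖t - a‖ ^ 2‖ := by
    intro t
    rw [smul_eq_mul, one_mul, norm_pow, norm_norm, Real.norm_eq_abs, Real.norm_eq_abs, sq_abs,
      abs_le]
    rcases max_cases t 0 with ⟨ht, _⟩ | ⟨ht, _⟩ <;> rcases max_cases a 0 with ⟨ha, _⟩ | ⟨ha, _⟩ <;>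
      rw [ht, ha] <;> constructor <;> nlinarith
  rw [hasDerivAt_iff_isLittleO]
  exact (Asymptotics.IsBigO.of_bound 1 (.of_forall hquad)).trans_isLittleO
    (Asymptotics.isLittleO_pow_sub_sub a one_lt_two)

/-- A system of inequality constraints `g i z ≤ 0` and equality constraints `h j z = 0`. -/
structure ConstraintSystem (E ι κ : Type*) where
  g : ι → E → ℝ
  h : κ → E → ℝ

namespace ConstraintSystem

section Residual

variable {E ι κ : Type*} (C : ConstraintSystem E ι κ)

/-- All constraint functions as one family, the inequalities first. -/
def constraint : ι ⊕ κ → E → ℝ := Sum.elim C.g C.h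

/-- The solution set of the constraint system. -/
def feasibleSet : Set E := {z | (∀ i, C.g i z ≤ 0) ∧ ∀ j, C.h j z = 0}

/-- The vector of signed constraint violations, in the Euclidean norm so that its norm is
differentiable at infeasible points. -/
def violation (z : E) : EuclideanSpace ℝ (ι ⊕ κ) :=
  WithLp.toLp 2 (Sum.elim (fun i => max (C.g i z) 0) fun j => C.h j z)

variable {C} {z : E} {k : ι ⊕ κ}

theorem violation_eq_zero_iff : C.violation z = 0 ↔ z ∈ C.feasibleSet := by
  simp [violation, feasibleSet, funext_iff]

theorem violation_inl_nonneg (i : ι) : 0 ≤ C.violation z (.inl i) :=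
  le_max_right _ _

theorem constraint_le_violation : C.constraint k z ≤ C.violation z k := by
  rcases k with i | j
  · exact le_max_left _ _
  · exact le_rfl

theorem violation_eq_constraint_of_ne_zero (hk : C.violation z k ≠ 0) :
    C.violation z k = C.constraint k z := by
  rcases k with i | j
  · exact max_eq_left (le_of_not_ge fun hi => hk (max_eq_right hi))
  · rfl

theorem continuousAt_violation [TopologicalSpace E] (hC : ∀ k, ContinuousAt (C.constraint k) z) :
    ContinuousAt C.violation z := by
  refine (PiLp.continuous_toLp 2 _).continuousAt.comp (continuousAt_pi.2 ?_)
  rintro (i | j)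
  · exact (hC (.inl i)).max continuousAt_const
  · exact hC (.inr j)

variable (C) [Fintype ι] [Fintype κ]

/-- The `ℓ¹` residual of the constraint system. -/
def residual (z : E) : ℝ := (∑ i, max (C.g i z) 0) + ∑ j, |C.h j z|

variable {C}

theorem norm_violation_le_residual : ‖C.violation z‖ ≤ C.residual z := by
  have hresidual : C.residual z = ∑ k, ‖C.violation z k‖ := by
    simp [residual, violation, abs_of_nonneg (le_max_right _ (0 : ℝ))]
  rw [EuclideanSpace.norm_eq, hresidual]
  exact Real.sqrt_le_iff.2 ⟨by positivity,
    Finset.sum_sq_le_sq_sum_of_nonneg fun k _ => norm_nonneg _⟩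

theorem residual_pos (hz : z ∉ C.feasibleSet) : 0 < C.residual z :=
  (norm_pos_iff.2 (violation_eq_zero_iff.not.2 hz)).trans_le norm_violation_le_residual

theorem continuousAt_residual [TopologicalSpace E] (hC : ∀ k, ContinuousAt (C.constraint k) z) :
    ContinuousAt C.residual z :=
  (tendsto_finsetSum _ fun i _ => (hC (.inl i)).max continuousAt_const).add
    (tendsto_finsetSum _ fun j _ => (hC (.inr j)).abs)

end Residual

section Derivative

variable {E ι κ : Type*} [NormedAddCommGroup E] [NormedSpace ℝ E] {C : ConstraintSystem E ι κ}
  {z : E}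

theorem hasFDerivAt_violation_sq {k : ι ⊕ κ} {c' : E →L[ℝ] ℝ}
    (hc : HasFDerivAt (C.constraint k) c' z) :
    HasFDerivAt (fun w => C.violation w k ^ 2) ((2 * C.violation z k) • c') z := by
  rcases k with i | j
  · exact (hasDerivAt_max_zero_sq (C.g i z)).comp_hasFDerivAt z hc
  · simpa [violation, constraint] using hc.pow 2

theorem hasFDerivAt_norm_violation [Fintype ι] [Fintype κ] {c' : ι ⊕ κ → E →L[ℝ] ℝ}
    (hz : z ∉ C.feasibleSet) (hc : ∀ k, HasFDerivAt (C.constraint k) (c' k) z) :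
    HasFDerivAt (fun w => ‖C.violation w‖)
      (∑ k, NormedSpace.normalize (C.violation z) k • c' k) z := by
  have hsq : HasFDerivAt (fun w => ‖C.violation w‖ ^ 2)
      (∑ k, (2 * C.violation z k) • c' k) z := by
    simp only [EuclideanSpace.real_norm_sq_eq]
    exact .fun_sum fun k _ => hasFDerivAt_violation_sq (hc k)
  have hne : ‖C.violation z‖ ≠ 0 := norm_ne_zero_iff.2 (violation_eq_zero_iff.not.2 hz)
  convert hsq.sqrt (pow_ne_zero 2 hne) using 1
  · simp only [Real.sqrt_sq (norm_nonneg _)]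
  · rw [Real.sqrt_sq (norm_nonneg _), Finset.smul_sum]
    refine Finset.sum_congr rfl fun k _ => ?_
    rw [smul_smul, NormedSpace.normalize, PiLp.smul_apply, smul_eq_mul]
    congr 1
    field_simp

end Derivative

section QuasiNormality

variable {E ι κ : Type*} [NormedAddCommGroup E] [NormedSpace ℝ E]

/-- The linearization cone of the feasible set at `x`. -/
def linearizedCone (C : ConstraintSystem E ι κ) (x : E) : Set E :=
  {d | (∀ i, C.g i x = 0 → fderiv ℝ (C.g i) x d ≤ 0) ∧ ∀ j, fderiv ℝ (C.h j) x d = 0}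

variable [Fintype ι] [Fintype κ]

/-- The multipliers which directional quasi-normality at `x` in direction `d` requires to vanish:
a multiplier without objective part whose nonzero entries belong to constraints that are active to
first order along `d` and are violated, with the sign of the multiplier, along some sequence
approaching `x` in direction `d`. -/
structure IsSingularMultiplier (C : ConstraintSystem E ι κ) (x d : E) (l : ι ⊕ κ → ℝ) :
    Prop where
  nonneg : ∀ i, 0 ≤ l (.inl i)
  active : ∀ i, l (.inl i) ≠ 0 → C.g i x = 0 ∧ fderiv ℝ (C.g i) x d = 0
  stationary : ∑ k, l k • fderiv ℝ (C.constraint k) x = 0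
  exists_seq : ∃ (u : ℕ → E) (t : ℕ → ℝ), Tendsto u atTop (𝓝 d) ∧ (∀ n, 0 < t n) ∧
    Tendsto t atTop (𝓝 0) ∧ ∀ n k, l k ≠ 0 → 0 < l k * C.constraint k (x + t n • u n)

/-- Quasi-normality at `x` in direction `d`. -/
def IsQuasiNormalInDirection (C : ConstraintSystem E ι κ) (x d : E) : Prop :=
  ∀ l, C.IsSingularMultiplier x d l → l = 0

/-- A sequence of infeasible points approaching `x` in direction `d`, with constraint violation of
order `o(‖y n - x‖)`, which is asymptotically stationary for the norm of the violation with
multiplier `l`. -/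
structure IsAsymptoticallyStationary (C : ConstraintSystem E ι κ) (x : E) (y : ℕ → E) (d : E)
    (l : EuclideanSpace ℝ (ι ⊕ κ)) : Prop where
  tendsto : Tendsto y atTop (𝓝 x)
  notMem_feasibleSet : ∀ n, y n ∉ C.feasibleSet
  tendsto_direction : Tendsto (fun n => NormedSpace.normalize (y n - x)) atTop (𝓝 d)
  tendsto_violation : Tendsto (fun n => ‖y n - x‖⁻¹ • C.violation (y n)) atTop (𝓝 0)
  tendsto_multiplier :
    Tendsto (fun n => NormedSpace.normalize (C.violation (y n))) atTop (𝓝 l)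
  tendsto_fderiv : Tendsto (fun n => ∑ k, NormedSpace.normalize (C.violation (y n)) k •
    fderiv ℝ (C.constraint k) (y n)) atTop (𝓝 0)

namespace IsAsymptoticallyStationary

variable {C : ConstraintSystem E ι κ} {x d : E} {y : ℕ → E} {l : EuclideanSpace ℝ (ι ⊕ κ)}
  {k : ι ⊕ κ}

theorem comp (hy : C.IsAsymptoticallyStationary x y d l) {φ : ℕ → ℕ} (hφ : StrictMono φ) :
    C.IsAsymptoticallyStationary x (y ∘ φ) d l where
  tendsto := hy.tendsto.comp hφ.tendsto_atTop
  notMem_feasibleSet n := hy.notMem_feasibleSet (φ n)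
  tendsto_direction := hy.tendsto_direction.comp hφ.tendsto_atTop
  tendsto_violation := hy.tendsto_violation.comp hφ.tendsto_atTop
  tendsto_multiplier := hy.tendsto_multiplier.comp hφ.tendsto_atTop
  tendsto_fderiv := hy.tendsto_fderiv.comp hφ.tendsto_atTop

theorem ne (hy : C.IsAsymptoticallyStationary x y d l) (hx : x ∈ C.feasibleSet) (n : ℕ) :
    y n ≠ x :=
  fun h => hy.notMem_feasibleSet n (h ▸ hx)

theorem norm_direction (hy : C.IsAsymptoticallyStationary x y d l) (hx : x ∈ C.feasibleSet) :
    ‖d‖ = 1 := by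
  refine tendsto_nhds_unique hy.tendsto_direction.norm (tendsto_const_nhds.congr fun n => ?_)
  exact (NormedSpace.norm_normalize_eq_one_iff.2 (sub_ne_zero.2 (hy.ne hx n))).symm

theorem norm_multiplier (hy : C.IsAsymptoticallyStationary x y d l) : ‖l‖ = 1 := by
  refine tendsto_nhds_unique hy.tendsto_multiplier.norm (tendsto_const_nhds.congr fun n => ?_)
  exact (NormedSpace.norm_normalize_eq_one_iff.2
    (violation_eq_zero_iff.not.2 (hy.notMem_feasibleSet n))).symm

theorem tendsto_multiplier_apply (hy : C.IsAsymptoticallyStationary x y d l) (k : ι ⊕ κ) :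
    Tendsto (fun n => ‖C.violation (y n)‖⁻¹ * C.violation (y n) k) atTop (𝓝 (l k)) :=
  ((EuclideanSpace.proj (𝕜 := ℝ) k).continuous.tendsto l).comp hy.tendsto_multiplier

theorem tendsto_violation_apply (hy : C.IsAsymptoticallyStationary x y d l) (k : ι ⊕ κ) :
    Tendsto (fun n => ‖y n - x‖⁻¹ * C.violation (y n) k) atTop (𝓝 0) :=
  ((EuclideanSpace.proj (𝕜 := ℝ) k).continuous.tendsto 0).comp hy.tendsto_violation

theorem tendsto_slope (hy : C.IsAsymptoticallyStationary x y d l) {f : E → ℝ}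
    (hf : DifferentiableAt ℝ f x) :
    Tendsto (fun n => ‖y n - x‖⁻¹ * (f (y n) - f x)) atTop (𝓝 (fderiv ℝ f x d)) := by
  have hstep : Tendsto (fun n => y n - x) atTop (𝓝 0) := by
    simpa using hy.tendsto.sub_const x
  simpa using hf.hasFDerivAt.hasFDerivWithinAt.lim hstep
    (.of_forall fun _ => Set.mem_univ _) hy.tendsto_direction

theorem eventually_mul_constraint_pos (hy : C.IsAsymptoticallyStationary x y d l) (hk : l k ≠ 0) :
    ∀ᶠ n in atTop, C.violation (y n) k = C.constraint k (y n) ∧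
      0 < l k * C.constraint k (y n) := by
  have hlim := (hy.tendsto_multiplier_apply k).const_mul (l k)
  filter_upwards [hlim.eventually_const_lt (mul_self_pos.2 hk)] with n hn
  have hpos : 0 < l k * C.violation (y n) k := by
    rw [mul_left_comm] at hn
    exact pos_of_mul_pos_right hn (by positivity)
  have heq := violation_eq_constraint_of_ne_zero (right_ne_zero_of_mul hpos.ne')
  exact ⟨heq, heq ▸ hpos⟩

theorem constraint_eq_zero (hy : C.IsAsymptoticallyStationary x y d l) (hx : x ∈ C.feasibleSet)
    (hC : ∀ k, ContinuousAt (C.constraint k) x) (hk : l k ≠ 0) : C.constraint k x = 0 := by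
  have hviolation : Tendsto (fun n => C.violation (y n)) atTop (𝓝 0) := by
    rw [← violation_eq_zero_iff.2 hx]
    exact (continuousAt_violation hC).tendsto.comp hy.tendsto
  refine tendsto_nhds_unique ((hC k).tendsto.comp hy.tendsto) ?_
  refine (((EuclideanSpace.proj (𝕜 := ℝ) k).continuous.tendsto 0).comp hviolation).congr' ?_
  filter_upwards [hy.eventually_mul_constraint_pos hk] with n hn using hn.1

theorem fderiv_constraint_eq_zero (hy : C.IsAsymptoticallyStationary x y d l)
    (hx : x ∈ C.feasibleSet) (hC : ∀ k, DifferentiableAt ℝ (C.constraint k) x) (hk : l k ≠ 0) :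
    fderiv ℝ (C.constraint k) x d = 0 := by
  refine tendsto_nhds_unique (hy.tendsto_slope (hC k)) ((hy.tendsto_violation_apply k).congr' ?_)
  filter_upwards [hy.eventually_mul_constraint_pos hk] with n hn
  rw [hn.1, hy.constraint_eq_zero hx (fun k => (hC k).continuousAt) hk, sub_zero]

theorem mem_linearizedCone (hy : C.IsAsymptoticallyStationary x y d l) (hx : x ∈ C.feasibleSet)
    (hC : ∀ k, DifferentiableAt ℝ (C.constraint k) x) : d ∈ C.linearizedCone x := by
  refine ⟨fun i hi => ?_, fun j => ?_⟩
  · refine le_of_tendsto_of_tendsto' (hy.tendsto_slope (hC (.inl i)))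
      (hy.tendsto_violation_apply (.inl i)) fun n => ?_
    rw [hi, sub_zero]
    gcongr
    exact constraint_le_violation (k := .inl i)
  · refine tendsto_nhds_unique (hy.tendsto_slope (hC (.inr j)))
      ((hy.tendsto_violation_apply (.inr j)).congr fun n => ?_)
    rw [hx.2 j, sub_zero]
    rfl

theorem stationary (hy : C.IsAsymptoticallyStationary x y d l)
    (hC : ∀ k, ContinuousAt (fderiv ℝ (C.constraint k)) x) :
    ∑ k, l k • fderiv ℝ (C.constraint k) x = 0 :=
  tendsto_nhds_unique (tendsto_finsetSum _ fun k _ =>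
    (hy.tendsto_multiplier_apply k).smul ((hC k).tendsto.comp hy.tendsto)) hy.tendsto_fderiv

theorem exists_seq (hy : C.IsAsymptoticallyStationary x y d l) (hx : x ∈ C.feasibleSet) :
    ∃ (u : ℕ → E) (t : ℕ → ℝ), Tendsto u atTop (𝓝 d) ∧ (∀ n, 0 < t n) ∧
      Tendsto t atTop (𝓝 0) ∧ ∀ n k, l k ≠ 0 → 0 < l k * C.constraint k (x + t n • u n) := by
  have hsign : ∀ᶠ n in atTop, ∀ k, l k ≠ 0 → 0 < l k * C.constraint k (y n) := by
    simp only [eventually_all]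
    exact fun k hk => (hy.eventually_mul_constraint_pos hk).mono fun n hn => hn.2
  obtain ⟨φ, hφ, hφ_sign⟩ := extraction_of_eventually_atTop hsign
  have hyφ := hy.comp hφ
  refine ⟨_, fun n => ‖y (φ n) - x‖, hyφ.tendsto_direction,
    fun n => norm_pos_iff.2 (sub_ne_zero.2 (hyφ.ne hx n)), ?_, fun n k hk => ?_⟩
  · exact tendsto_iff_norm_sub_tendsto_zero.1 hyφ.tendsto
  · simpa only [Function.comp_apply, NormedSpace.norm_smul_normalize, add_sub_cancel]
      using hφ_sign n k hk

theorem isSingularMultiplier (hy : C.IsAsymptoticallyStationary x y d l) (hx : x ∈ C.feasibleSet)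
    (hC : ∀ k, ContDiffAt ℝ 1 (C.constraint k) x) : C.IsSingularMultiplier x d l where
  nonneg i := ge_of_tendsto' (hy.tendsto_multiplier_apply (.inl i)) fun n =>
    mul_nonneg (by positivity) (violation_inl_nonneg i)
  active i hi := ⟨hy.constraint_eq_zero hx (fun k => (hC k).continuousAt) hi,
    hy.fderiv_constraint_eq_zero hx (fun k => (hC k).differentiableAt_one) hi⟩
  stationary := hy.stationary fun k => (hC k).continuousAt_fderiv one_ne_zero
  exists_seq := hy.exists_seq hx

end IsAsymptoticallyStationary

variable [FiniteDimensional ℝ E] {C : ConstraintSystem E ι κ} {x : E}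

theorem frequently_norm_sum_fderiv_le {ε : ℝ} (hx : x ∈ C.feasibleSet)
    (hC : ∀ k, ContDiffAt ℝ 1 (C.constraint k) x)
    (hnot : ¬ HasLocalErrorBound C.feasibleSet C.residual x) (hε : 0 < ε) :
    ∃ᶠ y in 𝓝 x, y ∉ C.feasibleSet ∧ ‖C.violation y‖ ≤ ε * ‖y - x‖ ∧
      ‖∑ k, NormedSpace.normalize (C.violation y) k • fderiv ℝ (C.constraint k) y‖ ≤ ε := by
  have : ProperSpace E := FiniteDimensional.proper ℝ E
  have hdiff : ∀ᶠ z in 𝓝 x, ∀ k, DifferentiableAt ℝ (C.constraint k) z :=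
    eventually_all.2 fun k =>
      ((hC k).eventually (by simp)).mono fun z hz => hz.differentiableAt_one
  have hlsc : ∀ᶠ z in 𝓝 x, LowerSemicontinuousAt (fun w => ‖C.violation w‖) z := by
    filter_upwards [hdiff] with z hz
    exact (continuousAt_violation fun k => (hz k).continuousAt).norm.lowerSemicontinuousAt
  have hnot_norm : ¬ HasLocalErrorBound C.feasibleSet (fun w => ‖C.violation w‖) x :=
    fun h => hnot (h.mono_residual (.of_forall fun z => norm_violation_le_residual))
  refine ((frequently_isLocalMin_of_not_hasLocalErrorBound hx hlsc (fun z => norm_nonneg _)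
    hnot_norm hε).and_eventually hdiff).mono ?_
  rintro y ⟨⟨hy, hy_norm, hmin⟩, hy_diff⟩
  rw [dist_eq_norm] at hy_norm
  exact ⟨hy, hy_norm, norm_le_of_hasFDerivAt_of_isLocalMin_add_mul_dist hε.le
    (hasFDerivAt_norm_violation hy fun k => (hy_diff k).hasFDerivAt) hmin⟩

theorem exists_seq_tendsto_sum_fderiv (hx : x ∈ C.feasibleSet)
    (hC : ∀ k, ContDiffAt ℝ 1 (C.constraint k) x)
    (hnot : ¬ HasLocalErrorBound C.feasibleSet C.residual x) :
    ∃ y : ℕ → E, Tendsto y atTop (𝓝 x) ∧ (∀ n, y n ∉ C.feasibleSet) ∧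
      Tendsto (fun n => ‖y n - x‖⁻¹ • C.violation (y n)) atTop (𝓝 0) ∧
      Tendsto (fun n => ∑ k, NormedSpace.normalize (C.violation (y n)) k •
        fderiv ℝ (C.constraint k) (y n)) atTop (𝓝 0) := by
  have hpos : ∀ n : ℕ, 0 < 1 / ((n : ℝ) + 1) := fun n => Nat.one_div_pos_of_nat
  choose y hy hyx using fun n => ((frequently_norm_sum_fderiv_le hx hC hnot (hpos n)).and_eventually
    (Metric.closedBall_mem_nhds x (hpos n))).exists
  choose hy_notMem hy_violation hy_fderiv using hy
  have hsmall := tendsto_one_div_add_atTop_nhds_zero_nat (𝕜 := ℝ)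
  refine ⟨y, ?_, hy_notMem, ?_, squeeze_zero_norm hy_fderiv hsmall⟩
  · exact tendsto_iff_dist_tendsto_zero.2 (squeeze_zero (fun n => dist_nonneg) hyx hsmall)
  · refine squeeze_zero_norm (fun n => ?_) hsmall
    have hne : y n ≠ x := fun h => hy_notMem n (h ▸ hx)
    rw [norm_smul, norm_inv, norm_norm, inv_mul_le_iff₀' (norm_pos_iff.2 (sub_ne_zero.2 hne))]
    exact hy_violation n

theorem exists_isAsymptoticallyStationary (hx : x ∈ C.feasibleSet)
    (hC : ∀ k, ContDiffAt ℝ 1 (C.constraint k) x)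
    (hnot : ¬ HasLocalErrorBound C.feasibleSet C.residual x) :
    ∃ y d l, C.IsAsymptoticallyStationary x y d l := by
  obtain ⟨y, hyx, hy_notMem, hy_violation, hy_fderiv⟩ := exists_seq_tendsto_sum_fderiv hx hC hnot
  have hcompact : IsCompact (Metric.sphere (0 : E) 1 ×ˢ
      Metric.sphere (0 : EuclideanSpace ℝ (ι ⊕ κ)) 1) :=
    have : ProperSpace E := FiniteDimensional.proper ℝ E
    (isCompact_sphere 0 1).prod (isCompact_sphere 0 1)
  have hsphere : ∀ n, (NormedSpace.normalize (y n - x), NormedSpace.normalize (C.violation (y n))) ∈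
      Metric.sphere (0 : E) 1 ×ˢ Metric.sphere (0 : EuclideanSpace ℝ (ι ⊕ κ)) 1 := by
    intro n
    have hne : y n ≠ x := fun h => hy_notMem n (h ▸ hx)
    rw [Set.mem_prod, mem_sphere_zero_iff_norm, mem_sphere_zero_iff_norm]
    exact ⟨NormedSpace.norm_normalize_eq_one_iff.2 (sub_ne_zero.2 hne),
      NormedSpace.norm_normalize_eq_one_iff.2 (violation_eq_zero_iff.not.2 (hy_notMem n))⟩
  obtain ⟨⟨d, l⟩, -, φ, hφ, hlim⟩ := hcompact.tendsto_subseq hsphere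
  rw [Prod.tendsto_iff] at hlim
  exact ⟨y ∘ φ, d, l, hyx.comp hφ.tendsto_atTop, fun n => hy_notMem (φ n), hlim.1,
    hy_violation.comp hφ.tendsto_atTop, hlim.2, hy_fderiv.comp hφ.tendsto_atTop⟩

theorem hasLocalErrorBound_of_isQuasiNormalInDirection (hx : x ∈ C.feasibleSet)
    (hC : ∀ k, ContDiffAt ℝ 1 (C.constraint k) x)
    (hqn : ∀ d ∈ C.linearizedCone x, d ≠ 0 → C.IsQuasiNormalInDirection x d) :
    HasLocalErrorBound C.feasibleSet C.residual x := by
  by_contra hnot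
  obtain ⟨y, d, l, hy⟩ := exists_isAsymptoticallyStationary hx hC hnot
  have hd_mem := hy.mem_linearizedCone hx fun k => (hC k).differentiableAt_one
  have hd : d ≠ 0 := ne_zero_of_norm_ne_zero (hy.norm_direction hx ▸ one_ne_zero)
  have hl : l ≠ 0 := ne_zero_of_norm_ne_zero (hy.norm_multiplier ▸ one_ne_zero)
  exact hl (WithLp.ofLp_injective 2 (hqn d hd_mem hd _ (hy.isSingularMultiplier hx hC)))

end QuasiNormality

end ConstraintSystem

theorem forall_piecewise_iff {α β : Type*} (s : Set α) [∀ i, Decidable (i ∈ s)] (f g : α → β)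
    (p : β → Prop) : (∀ i, p (s.piecewise f g i)) ↔ (∀ i ∈ s, p (f i)) ∧ ∀ i ∉ s, p (g i) := by
  simp only [Set.piecewise, apply_ite p, ite_prop_iff_and, forall_and]

namespace MPSC

variable {n p q m : ℕ} (P : MPSC n p q m) (β : Set (Fin m))

/-- The branch of the MPSC in which the switching constraint `G i z * H i z = 0` is replaced by
`G i z = 0` for `i ∈ β` and by `H i z = 0` for `i ∉ β`. -/
def branch : ConstraintSystem (Euc n) (Fin p) (Fin q ⊕ Fin m) where
  g := P.g
  h := Sum.elim P.h (β.piecewise P.G P.H)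

/-- The gradients of the constraints of `P.branch β`. -/
def branchGrad : Fin p ⊕ (Fin q ⊕ Fin m) → Euc n → Euc n :=
  Sum.elim P.g' (Sum.elim P.h' (β.piecewise P.G' P.H'))

variable {P β} {z d : Euc n}

theorem mem_branch_feasibleSet_iff : z ∈ (P.branch β).feasibleSet ↔
    (∀ i, P.g i z ≤ 0) ∧ (∀ j, P.h j z = 0) ∧ (∀ i ∈ β, P.G i z = 0) ∧ ∀ i ∉ β, P.H i z = 0 := by
  rw [← forall_piecewise_iff β P.G P.H (· z = 0)]
  simp only [ConstraintSystem.feasibleSet, branch, Set.mem_ofPred_eq, Sum.forall, Sum.elim_inl,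
    Sum.elim_inr]

theorem branch_feasibleSet_subset_feas : (P.branch β).feasibleSet ⊆ P.Feas := by
  intro z hz
  obtain ⟨hg, hh, hG, hH⟩ := mem_branch_feasibleSet_iff.1 hz
  refine ⟨hg, hh, fun i => ?_⟩
  by_cases hi : i ∈ β
  · rw [hG i hi, zero_mul]
  · rw [hH i hi, mul_zero]

variable (P) in
theorem exists_branch_residual_eq (z : Euc n) : ∃ β, (P.branch β).residual z = P.residual z := by
  refine ⟨{i | |P.G i z| ≤ |P.H i z|}, ?_⟩
  rw [ConstraintSystem.residual, residual, Fintype.sum_sum_type, ← add_assoc]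
  congr 1
  refine Finset.sum_congr rfl fun i _ => ?_
  by_cases hi : |P.G i z| ≤ |P.H i z|
  · simp [branch, Set.piecewise, hi]
  · simp [branch, Set.piecewise, hi, (not_le.1 hi).le]

variable (P β) in
theorem hasGradientAt_branch_constraint (k : Fin p ⊕ (Fin q ⊕ Fin m)) (z : Euc n) :
    HasGradientAt ((P.branch β).constraint k) (P.branchGrad β k z) z := by
  rcases k with i | j | i
  · exact P.grad_g i z
  · exact P.grad_h j z
  · by_cases hi : i ∈ β
    · simpa [ConstraintSystem.constraint, branch, branchGrad, hi] using P.grad_G i z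
    · simpa [ConstraintSystem.constraint, branch, branchGrad, hi] using P.grad_H i z

variable (P β) in
theorem continuous_branchGrad (k : Fin p ⊕ (Fin q ⊕ Fin m)) : Continuous (P.branchGrad β k) := by
  rcases k with i | j | i
  · exact P.cont_g' i
  · exact P.cont_h' j
  · by_cases hi : i ∈ β
    · simpa [branchGrad, hi] using P.cont_G' i
    · simpa [branchGrad, hi] using P.cont_H' i

variable (P β) in
theorem contDiff_branch_constraint (k : Fin p ⊕ (Fin q ⊕ Fin m)) :
    ContDiff ℝ 1 ((P.branch β).constraint k) := by
  refine contDiff_one_iff_hasFDerivAt.2 ⟨_, ?_,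
    fun z => (P.hasGradientAt_branch_constraint β k z).hasFDerivAt⟩
  exact (InnerProductSpace.toDual ℝ _).continuous.comp (P.continuous_branchGrad β k)

theorem mem_branch_linearizedCone_iff : d ∈ (P.branch β).linearizedCone z ↔
    (∀ i ∈ P.Ig z, ⟪P.g' i z, d⟫_ℝ ≤ 0) ∧ (∀ j, ⟪P.h' j z, d⟫_ℝ = 0) ∧
      (∀ i ∈ β, ⟪P.G' i z, d⟫_ℝ = 0) ∧ ∀ i ∉ β, ⟪P.H' i z, d⟫_ℝ = 0 := by
  have hinl : ∀ i, fderiv ℝ ((P.branch β).g i) z d = ⟪P.g' i z, d⟫_ℝ :=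
    fun i => (P.hasGradientAt_branch_constraint β (.inl i) z).fderiv_apply
  have hinr : ∀ j, fderiv ℝ ((P.branch β).h j) z d = ⟪P.branchGrad β (.inr j) z, d⟫_ℝ :=
    fun j => (P.hasGradientAt_branch_constraint β (.inr j) z).fderiv_apply
  rw [← forall_piecewise_iff β P.G' P.H' (⟪· z, d⟫_ℝ = 0)]
  simp only [ConstraintSystem.linearizedCone, Set.mem_ofPred_eq, hinl, hinr, branchGrad,
    Sum.forall, Sum.elim_inl, Sum.elim_inr]
  rfl

theorem branch_linearizedCone_subset_linCone (hz : z ∈ (P.branch β).feasibleSet) :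
    (P.branch β).linearizedCone z ⊆ P.LinCone z := by
  intro d hd
  obtain ⟨-, -, hG, hH⟩ := mem_branch_feasibleSet_iff.1 hz
  obtain ⟨hg', hh', hG', hH'⟩ := mem_branch_linearizedCone_iff.1 hd
  refine ⟨hg', hh', fun i hi => hG' i (not_imp_comm.1 (hH i) hi.2),
    fun i hi => hH' i (mt (hG i) hi.1), fun i _ => ?_⟩
  by_cases hi : i ∈ β
  · rw [hG' i hi, zero_mul]
  · rw [hH' i hi, mul_zero]

theorem sum_smul_branchGrad (l : Fin p ⊕ (Fin q ⊕ Fin m) → ℝ) :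
    ∑ k, l k • P.branchGrad β k z = (∑ i, l (.inl i) • P.g' i z) +
      (∑ j, l (.inr (.inl j)) • P.h' j z) +
      ∑ i, (β.indicator (fun i => l (.inr (.inr i))) i • P.G' i z +
        βᶜ.indicator (fun i => l (.inr (.inr i))) i • P.H' i z) := by
  rw [Fintype.sum_sum_type, Fintype.sum_sum_type, ← add_assoc]
  congr 1
  refine Finset.sum_congr rfl fun i _ => ?_
  by_cases hi : i ∈ β <;> simp [branchGrad, hi]

theorem sum_smul_branchGrad_eq_zero_iff {l : Fin p ⊕ (Fin q ⊕ Fin m) → ℝ} :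
    ∑ k, l k • P.branchGrad β k z = 0 ↔
      ∑ k, l k • fderiv ℝ ((P.branch β).constraint k) z = 0 := by
  have hfderiv : ∀ k, fderiv ℝ ((P.branch β).constraint k) z =
      InnerProductSpace.toDual ℝ _ (P.branchGrad β k z) :=
    fun k => (P.hasGradientAt_branch_constraint β k z).hasFDerivAt.fderiv
  rw [← (InnerProductSpace.toDual ℝ (Euc n)).map_eq_zero_iff]
  simp [hfderiv]

theorem mem_of_mem_IGs_union_IGd (hz : z ∈ (P.branch β).feasibleSet)
    (hd : d ∈ (P.branch β).linearizedCone z) {i : Fin m} (hi : i ∈ P.IGs z ∪ P.IGd z d) :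
    i ∈ β := by
  by_contra hβ
  rcases hi with hi | hi
  · exact hi.2 ((mem_branch_feasibleSet_iff.1 hz).2.2.2 i hβ)
  · exact hi.2.2 ((mem_branch_linearizedCone_iff.1 hd).2.2.2 i hβ)

theorem notMem_of_mem_IHs_union_IHd (hz : z ∈ (P.branch β).feasibleSet)
    (hd : d ∈ (P.branch β).linearizedCone z) {i : Fin m} (hi : i ∈ P.IHs z ∪ P.IHd z d) :
    i ∉ β := by
  intro hβ
  rcases hi with hi | hi
  · exact hi.1 ((mem_branch_feasibleSet_iff.1 hz).2.2.1 i hβ)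
  · exact hi.2.1 ((mem_branch_linearizedCone_iff.1 hd).2.2.1 i hβ)

theorem QuasiNormalDir.branch (hqn : P.QuasiNormalDir z d) (hz : z ∈ (P.branch β).feasibleSet)
    (hd : d ∈ (P.branch β).linearizedCone z) : (P.branch β).IsQuasiNormalInDirection z d := by
  intro l hl
  set lS : Fin m → ℝ := fun i => l (.inr (.inr i))
  obtain ⟨u, t, hu, ht_pos, ht, hsign⟩ := hl.exists_seq
  have hactive : ∀ i ∉ P.Igd z d, l (.inl i) = 0 := fun i => not_imp_comm.1 fun hi => by
    refine ⟨(hl.active i hi).1, ?_⟩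
    rw [← (P.grad_g i z).fderiv_apply]
    exact (hl.active i hi).2
  have hsign_G : ∀ k i, β.indicator lS i ≠ 0 →
      0 < β.indicator lS i * P.G i (z + t k • u k) := by
    intro k i hi
    have hiβ := Set.mem_of_indicator_ne_zero hi
    rw [Set.indicator_of_mem hiβ] at hi ⊢
    simpa [ConstraintSystem.constraint, MPSC.branch, hiβ] using hsign k _ hi
  have hsign_H : ∀ k i, βᶜ.indicator lS i ≠ 0 →
      0 < βᶜ.indicator lS i * P.H i (z + t k • u k) := by
    intro k i hi
    have hiβ := Set.mem_of_indicator_ne_zero hi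
    rw [Set.indicator_of_mem hiβ] at hi ⊢
    have hiβ' : i ∉ β := hiβ
    simpa [ConstraintSystem.constraint, MPSC.branch, hiβ'] using hsign k _ hi
  obtain ⟨hlg, hlh, hlG, hlH⟩ := hqn (fun i => l (.inl i)) (fun j => l (.inr (.inl j)))
    (β.indicator lS) (βᶜ.indicator lS)
    (by rw [← sum_smul_branchGrad, sum_smul_branchGrad_eq_zero_iff.2 hl.stationary])
    ⟨fun i _ => hl.nonneg i, hactive,
      fun i hi => Set.indicator_of_notMem (not_not_intro (mem_of_mem_IGs_union_IGd hz hd hi)) _,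
      fun i hi => Set.indicator_of_notMem (notMem_of_mem_IHs_union_IHd hz hd hi) _,
      fun i _ => by by_cases hi : i ∈ β <;> simp [hi]⟩
    ⟨u, t, hu, ht_pos, ht, fun k => ⟨fun i => hsign k (.inl i), fun j => hsign k (.inr (.inl j)),
      hsign_G k, hsign_H k⟩⟩
  have hlS_zero : lS = 0 := by rw [← β.indicator_self_add_compl lS, hlG, hlH, add_zero]
  funext k
  rcases k with i | j | i
  exacts [congrFun hlg i, congrFun hlh j, congrFun hlS_zero i]

theorem hasLocalErrorBound_branch (hz : z ∈ P.Feas)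
    (hqn : ∀ d ∈ P.LinCone z, d ≠ 0 → P.QuasiNormalDir z d) :
    HasLocalErrorBound P.Feas (P.branch β).residual z := by
  by_cases hzβ : z ∈ (P.branch β).feasibleSet
  · have hbranch := ConstraintSystem.hasLocalErrorBound_of_isQuasiNormalInDirection hzβ
      (fun k => (P.contDiff_branch_constraint β k).contDiffAt) fun d hd hd_ne =>
        (hqn d (branch_linearizedCone_subset_linCone hzβ hd) hd_ne).branch hzβ hd
    exact hbranch.mono_set ⟨z, hzβ⟩ branch_feasibleSet_subset_feas
  · have hcont : ContinuousAt (P.branch β).residual z :=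
      ConstraintSystem.continuousAt_residual fun k =>
        (P.contDiff_branch_constraint β k).continuous.continuousAt
    exact .of_residual_pos hz hcont (ConstraintSystem.residual_pos hzβ)

end MPSC

theorem mpsc_dirQuasiNormal_errorBound_general {n p q m : ℕ} (P : MPSC n p q m) (zs : Euc n)
    (hfeas : zs ∈ P.Feas) (hqn : ∀ d ∈ P.LinCone zs, d ≠ 0 → P.QuasiNormalDir zs d) :
    P.ErrorBound zs := by
  have hbranch (β : Set (Fin m)) : HasLocalErrorBound P.Feas (P.branch β).residual zs :=
    MPSC.hasLocalErrorBound_branch hfeas hqn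
  have hresidual (z : Euc n) : ∃ β, (P.branch β).residual z ≤ P.residual z :=
    (P.exists_branch_residual_eq z).imp fun β hβ => hβ.le
  obtain ⟨α, hα, hbound⟩ := HasLocalErrorBound.of_finite hbranch (.of_forall hresidual)
  exact ⟨_, hbound, α, hα, fun _ => id⟩

/-- MPSC directional quasi-normality implies the MPSC local error bound. -/
theorem mpsc_dirQuasiNormal_errorBound {n p q m : ℕ} (P : MPSC n p q m) (zs : Euc n)
    (hfeas : zs ∈ P.Feas) (hqn : P.DirQuasiNormal zs) :
    P.ErrorBound zs :=
  mpsc_dirQuasiNormal_errorBound_general P zs hfeas fun d hd _ => hqn d hd
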